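/- Let GF(8) be the field with 8 elements and F_2 its prime subfield. There do not exist distinct elements α_0, α_1, …, α_5 of GF(8), functions z_1, …, z_5 : GF(8)^4 → F_2, and an F_2-linear map Rec : F_2^5 → F_2^4, such that for all x = (x_1,x_2,x_3,x_4) ∈ F_2^4 and all ρ = (ρ_1,ρ_2,ρ_3,ρ_4) ∈ GF(8)^4, Rec( ( z_j( (x_i + ρ_i·(α_j − α_0))_{i∈[4]} ) )_{j∈[5]} ) = x, where x_i ∈ F_2 ⊆ GF(8) via the canonical embedding. -/

import Mathlib

/-!
Write `μ_j = (α_j - α_0)⁻¹` and `G_j(w) = z_j((α_j - α_0) w)`; the answer of server `j` is then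
`G_j(ρ + μ_j x)`. The map `Rec` is onto, so its kernel is `{0, u}` for some `u ≠ 0`. Taking `x = 0`
shows `(G_j(ρ))_j ∈ {0, u}` for every `ρ`. If `u_j = 0`, then `G_j` vanishes identically, hence
`Rec` is onto already on the hyperplane `v_j = 0`, which also contains its kernel: impossible. So
`u` is the all-ones vector, and all the `G_j` are one and the same function `g`
(`ker_const_and_answers_eq`).

Therefore, for any `v ∈ F₂⁵` and `x = Rec v`, the vector `(g(ρ + μ_j x))_j - v` is constant in `j`,
which says that translating the argument of `g` by `(μ_j - μ_0) x` adds the constant `v_j - v_0`.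
Such pairs (translation, increment) form an additive group (`translationPairs`). Since
`F₂ × GF(8)` has dimension `4 < 5`, there is `b ≠ 0` in `F₂⁵` with `∑ b_j = 0` and
`∑ b_j μ_j = 0`. Combining the pairs with coefficients `b_j` gives translation `0`, so increment
`∑ b_j v_j = 0`. As `v` is arbitrary, `b = 0`, a contradiction.
-/

/-- The pairs `(d, l)` such that translating the argument of `g` by `d` adds the constant `l` to
its value. -/
def translationPairs {V : Type*} [AddCommGroup V] (g : V → ZMod 2) :
    AddSubmonoid (V × ZMod 2) where
  carrier := {p | ∀ w, g (w + p.1) = g w + p.2}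
  zero_mem' := by intro w; simp
  add_mem' := by
    intro p q hp hq w
    simp only [Set.mem_ofPred_eq] at hp hq
    rw [Prod.fst_add, Prod.snd_add, ← add_assoc, hq, hp, add_assoc]

/-- If `Rec` recovers `x` from the answers `G_j(ρ + ι_j(x))`, for all `ρ`, then the kernel of `Rec`
consists of constant vectors and the functions `G_j` all coincide. It is applied with
`ι_j(x) = μ_j x`. -/
lemma ker_const_and_answers_eq {V : Type*} [AddCommGroup V]
    (ι : Fin 5 → (Fin 4 → ZMod 2) → V) (hι : ∀ j, ι j 0 = 0)
    (G : Fin 5 → V → ZMod 2)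
    (Rec : (Fin 5 → ZMod 2) →ₗ[ZMod 2] (Fin 4 → ZMod 2))
    (h : ∀ x ρ, Rec (fun j => G j (ρ + ι j x)) = x) :
    (∀ v, Rec v = 0 → ∀ j, v j = v 0) ∧ ∀ j w, G j w = G 0 w := by
  have hsurj : Function.Surjective Rec := fun x => ⟨_, h x 0⟩
  have hker : Module.finrank (ZMod 2) (LinearMap.ker Rec) = 1 := by
    have h1 := LinearMap.finrank_range_add_finrank_ker Rec
    rw [LinearMap.range_eq_top.2 hsurj, finrank_top] at h1
    simp only [Module.finrank_fin_fun] at h1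
    omega
  obtain ⟨⟨u, _⟩, _, hu⟩ := finrank_eq_one_iff'.1 hker
  have hu' : ∀ v, Rec v = 0 → ∃ c : ZMod 2, ∀ j, c * u j = v j := by
    intro v hv
    obtain ⟨c, hc⟩ := hu ⟨v, hv⟩
    exact ⟨c, fun j => congrFun (congrArg Subtype.val hc) j⟩
  have h0 : ∀ w, Rec (fun j => G j w) = 0 := by
    intro w
    simpa [hι] using h 0 w
  have hone : ∀ j, u j = 1 := by
    intro j
    by_contra hj
    have hj0 : u j = 0 := (by decide : ∀ a : ZMod 2, a ≠ 1 → a = 0) _ hj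
    have hG : ∀ w, G j w = 0 := by
      intro w
      obtain ⟨c, hc⟩ := hu' _ (h0 w)
      rw [← hc j, hj0, mul_zero]
    -- The `j`-th unit vector differs by a kernel element from an answer vector; both the kernel
    -- element and the answer vector have zero `j`-th coordinate.
    have hv := h (Rec (Pi.single j 1)) 0
    obtain ⟨c, hc⟩ := hu' (Pi.single j 1 -
      fun k => G k (0 + ι k (Rec (Pi.single j 1)))) (by rw [map_sub, hv, sub_self])
    have := hc j
    simp [hj0, hG] at this
  have hconst : ∀ v, Rec v = 0 → ∀ j, v j = v 0 := by
    intro v hv j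
    obtain ⟨c, hc⟩ := hu' v hv
    rw [← hc j, ← hc 0, hone, hone]
  exact ⟨hconst, fun j w => hconst _ (h0 w) j⟩

/-- Five elements of `GF(8)` satisfy a nontrivial affine dependency over `F₂`. -/
lemma exists_affine_dependency (μ : Fin 5 → GaloisField 2 3) :
    ∃ b : Fin 5 → ZMod 2, b ≠ 0 ∧ ∑ j, b j = 0 ∧ ∑ j, b j • μ j = 0 := by
  have hdim : Module.finrank (ZMod 2) (ZMod 2 × GaloisField 2 3) = 4 := by
    rw [Module.finrank_prod, Module.finrank_self, GaloisField.finrank 2 (by norm_num)]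
  have hnot : ¬ LinearIndependent (ZMod 2)
      (fun j => ((1 : ZMod 2), μ j) : Fin 5 → ZMod 2 × GaloisField 2 3) := by
    intro hli
    have := hli.fintype_card_le_finrank
    rw [hdim, Fintype.card_fin] at this
    omega
  obtain ⟨b, hb, j, hj⟩ := Fintype.not_linearIndependent_iff.1 hnot
  refine ⟨b, fun h => hj (congrFun h j), ?_, ?_⟩
  · simpa [Prod.fst_sum] using congrArg Prod.fst hb
  · simpa [Prod.snd_sum] using congrArg Prod.snd hb

/-- **No Shamir-based `F₂`-linear HSS for `CONCAT₄(F₂)` over `GF(8)` with download cost 5.**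
There do not exist distinct `α_0, …, α_5 ∈ GF(8)`, one-bit answer functions
`z_1, …, z_5 : GF(8)⁴ → F₂`, and an `F₂`-linear map `Rec : F₂⁵ → F₂⁴` such that for all
secrets `x ∈ F₂⁴` and all randomness `ρ ∈ GF(8)⁴`,
`Rec ((z_j ((x_i + ρ_i·(α_j − α_0))_i))_j) = x`, where `x_i` is embedded in `GF(8)`
canonically.  (Here `x_i + ρ_i(α_j − α_0) = p_i(α_j)` for the degree-`≤1` Shamir
polynomial `p_i(X) = x_i + ρ_i(X − α_0)` with `p_i(α_0) = x_i`.) -/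
theorem no_shamir_hss_concat4_gf8 :
    ¬ ∃ (α : Fin 6 → GaloisField 2 3) (_ : Function.Injective α)
        (z : Fin 5 → (Fin 4 → GaloisField 2 3) → ZMod 2)
        (Rec : (Fin 5 → ZMod 2) →ₗ[ZMod 2] (Fin 4 → ZMod 2)),
      ∀ (x : Fin 4 → ZMod 2) (ρ : Fin 4 → GaloisField 2 3),
        Rec (fun j => z j (fun i =>
          algebraMap (ZMod 2) (GaloisField 2 3) (x i) + ρ i * (α j.succ - α 0))) = x := by
  rintro ⟨α, hα, z, Rec, h⟩
  have hne : ∀ j : Fin 5, α j.succ - α 0 ≠ 0 := fun j =>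
    sub_ne_zero.2 (hα.ne (Fin.succ_ne_zero j))
  let emb : (Fin 4 → ZMod 2) → Fin 4 → GaloisField 2 3 :=
    fun x i => algebraMap (ZMod 2) (GaloisField 2 3) (x i)
  let μ : Fin 5 → GaloisField 2 3 := fun j => (α j.succ - α 0)⁻¹
  let G : Fin 5 → (Fin 4 → GaloisField 2 3) → ZMod 2 :=
    fun j w => z j (fun i => w i * (α j.succ - α 0))
  have hG : ∀ x ρ, Rec (fun j => G j (ρ + μ j • emb x)) = x := by
    intro x ρ
    refine Eq.trans ?_ (h x ρ)
    congr 1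
    funext j
    simp only [G]
    congr 1
    funext i
    simp only [μ, emb, Pi.add_apply, Pi.smul_apply, smul_eq_mul]
    field_simp [hne j]
    ring
  obtain ⟨hconst, hGeq⟩ := ker_const_and_answers_eq (fun j x => μ j • emb x)
    (fun j => by funext i; simp [emb]) G Rec hG
  obtain ⟨b, hb0, hb1, hbμ⟩ := exists_affine_dependency μ
  have hpair : ∀ v j, ((μ j - μ 0) • emb (Rec v), v j - v 0) ∈ translationPairs (G 0) := by
    intro v j w
    -- Apply the reconstruction identity with randomness `w - μ_0 x`.
    have hk := hconst ((fun k => G k ((w - μ 0 • emb (Rec v)) + μ k • emb (Rec v))) - v)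
      (by rw [map_sub, hG, sub_self]) j
    simp only [Pi.sub_apply, hGeq j, sub_add_cancel] at hk
    have harg : w + (μ j - μ 0) • emb (Rec v)
        = w - μ 0 • emb (Rec v) + μ j • emb (Rec v) := by
      rw [sub_smul]; abel
    simp only [harg]
    linear_combination hk
  have hmem : ∀ v, (∑ j, b j • ((μ j - μ 0) • emb (Rec v), v j - v 0)) ∈
      translationPairs (G 0) := by
    intro v
    refine sum_mem fun j _ => ?_
    rcases (by decide : ∀ a : ZMod 2, a = 0 ∨ a = 1) (b j) with hj | hj
    · rw [hj, zero_smul]; exact zero_mem _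
    · rw [hj, one_smul]; exact hpair v j
  have hφ : ∀ v : Fin 5 → ZMod 2, ∑ j, b j * v j = 0 := by
    intro v
    have hfst : ∑ j, b j • ((μ j - μ 0) • emb (Rec v)) = 0 := by
      simp_rw [← smul_assoc, ← Finset.sum_smul, smul_sub]
      rw [Finset.sum_sub_distrib, hbμ, ← Finset.sum_smul, hb1, zero_smul, sub_zero, zero_smul]
    have hsnd : ∑ j, b j * (v j - v 0) = ∑ j, b j * v j := by
      simp_rw [mul_sub]
      rw [Finset.sum_sub_distrib, ← Finset.sum_mul, hb1, zero_mul, sub_zero]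
    have h1 := hmem v 0
    simp only [Prod.fst_sum, Prod.snd_sum, Prod.smul_fst, Prod.smul_snd, smul_eq_mul, hfst, hsnd,
      add_zero] at h1
    exact left_eq_add.1 h1
  apply hb0
  funext j
  simpa [Pi.single_apply] using hφ (Pi.single j 1)
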